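/- Vanishing of alternating sums with a redundant element. Let ι be a type, I a Finset of ι, y ∈ I, G an additive commutative group, and f a function from Finsets of ι to G such that f(M ∪ {y}) = f(M) for every M ⊆ I \ {y}. Then Σ_{M ⊆ I} (−1)^{|I|−|M|} · f(M) = 0. -/

import Mathlib

/-- **Vanishing of alternating sums with a redundant element.**
If `y ∈ I` and `f (M ∪ {y}) = f M` for every `M ⊆ I \ {y}`, then
`Σ_{M ⊆ I} (−1)^{|I|−|M|} • f M = 0`. -/
theorem alternating_sum_eq_zero_of_redundant {ι : Type*} [DecidableEq ι]
    (I : Finset ι) (y : ι) (hy : y ∈ I) {G : Type*} [AddCommGroup G]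
    (f : Finset ι → G) (hf : ∀ M ⊆ I \ {y}, f (M ∪ {y}) = f M) :
    ∑ M ∈ I.powerset, ((-1 : ℤ) ^ (I.card - M.card)) • f M = 0 := by
  -- The subsets of `I` split into pairs `M`, `insert y M` with `y ∉ M`, whose terms cancel.
  obtain ⟨J, hyJ, rfl⟩ : ∃ J, y ∉ J ∧ insert y J = I :=
    ⟨I.erase y, Finset.notMem_erase y I, Finset.insert_erase hy⟩
  rw [Finset.sum_powerset_insert hyJ, ← Finset.sum_add_distrib]
  refine Finset.sum_eq_zero fun M hM => ?_
  rw [Finset.mem_powerset] at hM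
  have hyM : y ∉ M := fun h => hyJ (hM h)
  have hfM : f (insert y M) = f M := by
    rw [← hf M (by grind), Finset.union_comm, Finset.singleton_union]
  -- `|M| ≤ |J|`, so the truncated subtraction in the exponent is exact.
  have hcard : J.card + 1 - M.card = (J.card - M.card) + 1 := by
    have := Finset.card_le_card hM
    omega
  rw [hfM, Finset.card_insert_of_notMem hyJ, Finset.card_insert_of_notMem hyM, hcard,
    Nat.add_sub_add_right, pow_succ, mul_neg_one, neg_smul, neg_add_cancel]
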